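/- Let p be a prime, let c = ⌈p/2⌉/p, let i be a natural number, and let d > 0 be a real number. Suppose that every nonempty open subinterval of [0,1] of length greater than d contains a point of Q_p^i. Then every nonempty open subinterval of [0,1] of length greater than c·d contains a point of Q_p^{i+1}. -/

import Mathlib

/-- For a prime `p`, the constant `c = ⌈p/2⌉ / p`. -/
noncomputable def ratioC (p : ℕ) : ℝ := (⌈(p : ℝ) / 2⌉ : ℝ) / (p : ℝ)

/-- The sets `Q_p^i ⊆ ℝ`: `Q_p^0 = {0, 1}` and
`Q_p^{i+1} = Q_p^i ∪ {c·x : x ∈ Q_p^i} ∪ {1 − c·x : x ∈ Q_p^i}` where `c = ⌈p/2⌉/p`. -/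
noncomputable def Qp (p : ℕ) : ℕ → Set ℝ
  | 0 => {0, 1}
  | i + 1 =>
      Qp p i ∪ (fun x => ratioC p * x) '' Qp p i ∪ (fun x => 1 - ratioC p * x) '' Qp p i

/-!
Write `c = ⌈p/2⌉ / p`, so that `c ≥ 1/2`. The map `x ↦ c x` carries `[0, 1]` onto `[0, c]` and
`x ↦ 1 - c x` carries it onto `[1 - c, 1]`, both shrinking holes by the factor `c`. These two
intervals cover `[0, 1]`, and a hole of the union cannot straddle them: an interval starting before
`1 - c` and ending after `c` contains `c = c · 1`, which lies in the first image because `1` lies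
in every `Q_p^i`.
-/

/-- The holes of `S` in `[u, v]` have length at most `d`: every nonempty open subinterval of
`[u, v]` of length greater than `d` contains a point of `S`. Nonemptiness `a < b` is required
separately because `d` may be negative. -/
def HoleLengthLE {α : Type*} [AddCommGroup α] [Preorder α] (S : Set α) (u v d : α) : Prop :=
  ∀ a b : α, u ≤ a → b ≤ v → a < b → d < b - a → ∃ x ∈ S, x ∈ Set.Ioo a b

namespace HoleLengthLE

section OrderedGroup

variable {α : Type*} [AddCommGroup α] {S T : Set α} {u v r s d : α}

lemma mono [Preorder α] (h : HoleLengthLE S u v d) (hST : S ⊆ T) : HoleLengthLE T u v d := by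
  intro a b hua hbv hab hd
  obtain ⟨x, hxS, hx⟩ := h a b hua hbv hab hd
  exact ⟨x, hST hxS, hx⟩

lemma image_const_sub [PartialOrder α] [IsOrderedAddMonoid α] (h : HoleLengthLE S u v d) (t : α) :
    HoleLengthLE ((fun x => t - x) '' S) (t - v) (t - u) d := by
  intro a b hva hbu hab hd
  obtain ⟨x, hxS, hbx, hxa⟩ := h (t - b) (t - a) (le_sub_comm.1 hbu) (sub_le_comm.1 hva)
    (sub_lt_sub_left hab t) (by rwa [sub_sub_sub_cancel_left])
  exact ⟨t - x, ⟨x, hxS, rfl⟩, lt_sub_comm.1 hxa, sub_lt_comm.1 hbx⟩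

lemma union [LinearOrder α] (hS : HoleLengthLE S u v d) (hT : HoleLengthLE T r s d)
    (hrv : r ≤ v) (hv : v ∈ S) : HoleLengthLE (S ∪ T) u s d := by
  intro a b hua hbs hab hd
  rcases le_or_gt b v with hbv | hvb
  · exact hS.mono Set.subset_union_left a b hua hbv hab hd
  rcases le_or_gt r a with hra | har
  · exact hT.mono Set.subset_union_right a b hra hbs hab hd
  · exact ⟨v, Or.inl hv, har.trans_le hrv, hvb⟩

end OrderedGroup

section OrderedField

variable {K : Type*} [Field K] [LinearOrder K] [IsStrictOrderedRing K]
  {S : Set K} {u v d c : K}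

lemma image_mul_left (h : HoleLengthLE S u v d) (hc : 0 < c) :
    HoleLengthLE ((fun x => c * x) '' S) (c * u) (c * v) (c * d) := by
  intro a b hua hbv hab hd
  have hlength : d < b / c - a / c := by rwa [← sub_div, lt_div_iff₀' hc]
  obtain ⟨x, hxS, hax, hxb⟩ := h (a / c) (b / c) ((le_div_iff₀' hc).2 hua)
    ((div_le_iff₀' hc).2 hbv) (div_lt_div_of_pos_right hab hc) hlength
  exact ⟨c * x, ⟨x, hxS, rfl⟩, (div_lt_iff₀' hc).1 hax, (lt_div_iff₀' hc).1 hxb⟩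

lemma image_mul_union_image_one_sub_mul (h : HoleLengthLE S 0 1 d) (h_one : 1 ∈ S)
    (hc : 1 / 2 ≤ c) :
    HoleLengthLE ((fun x => c * x) '' S ∪ (fun x => 1 - c * x) '' S) 0 1 (c * d) := by
  have hleft : HoleLengthLE ((fun x => c * x) '' S) 0 c (c * d) := by
    simpa only [mul_zero, mul_one] using h.image_mul_left (one_half_pos.trans_le hc)
  have hright : HoleLengthLE ((fun x => 1 - c * x) '' S) (1 - c) 1 (c * d) := by
    simpa only [Set.image_image, sub_zero] using hleft.image_const_sub 1
  exact hleft.union hright (by linarith) ⟨1, h_one, mul_one c⟩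

end OrderedField

end HoleLengthLE

lemma one_mem_Qp (p i : ℕ) : (1 : ℝ) ∈ Qp p i := by
  induction i with
  | zero => exact Or.inr rfl
  | succ i ih => exact Or.inl (Or.inl ih)

lemma half_le_ratioC {p : ℕ} (hp : 0 < p) : 1 / 2 ≤ ratioC p := by
  have hp' : (0 : ℝ) < p := Nat.cast_pos.2 hp
  rw [ratioC, le_div_iff₀ hp', one_div_mul_eq_div]
  exact Int.le_ceil _

theorem Qp_hole_shrinks_general {p i : ℕ} {d : ℝ} (hp : 0 < p)
    (h : HoleLengthLE (Qp p i) 0 1 d) :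
    HoleLengthLE (Qp p (i + 1)) 0 1 (ratioC p * d) :=
  (h.image_mul_union_image_one_sub_mul (one_mem_Qp p i) (half_le_ratioC hp)).mono
    (Set.union_subset_union_left _ Set.subset_union_right)

/-- Let `p` be prime, `c = ⌈p/2⌉/p`, `i : ℕ`, `d > 0`. If every
nonempty open subinterval of `[0,1]` of length greater than `d` contains a point of
`Q_p^i`, then every nonempty open subinterval of `[0,1]` of length greater than `c·d`
contains a point of `Q_p^{i+1}`. -/
theorem Qp_hole_shrinks
    (p : ℕ) (hp : p.Prime) (i : ℕ) (d : ℝ) (hd : 0 < d)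
    (h : ∀ a b : ℝ, 0 ≤ a → b ≤ 1 → a < b → d < b - a →
      ∃ x ∈ Qp p i, x ∈ Set.Ioo a b) :
    ∀ a b : ℝ, 0 ≤ a → b ≤ 1 → a < b → ratioC p * d < b - a →
      ∃ x ∈ Qp p (i + 1), x ∈ Set.Ioo a b :=
  Qp_hole_shrinks_general hp.pos h
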